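/- The dimensional number t_B, viewed as a function of B ∈ (1,∞), satisfies lim_{B→1⁺} t_B = 1 and lim_{B→∞} t_B = 1/2. -/

import Mathlib

/-!
Write `Z_n(s) = Σ q_n^{-2s}` for the sum over `n`-tuples of positive integers. Three facts about
continuants give the theorem.

* The cylinder identity `Σ 1 / (q_n (q_n + q_{n-1})) = 1` (`tsum_cyl`), proved by telescoping in one
  digit at a time. As `q_{n-1} ≤ q_n` it yields `1 ≤ Z_n(1) ≤ 2`; together with the exponential
  growth `q_n ≥ (3/2)^n / 2` it yields `Z_n(s) ≥ ((3/2)^n / 2)^{2(1-s)}` for `s ≤ 1`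
  (`presSum_lower`).
* Supermultiplicativity `q_{m+n} ≥ q_m q_n`, so `presSum` is submultiplicative in `n`. Fekete's lemma
  then gives the existence of the limit defining the pressure for `1/2 < s ≤ 1`
  (`mem_presSet_of_bound`).
* The sums are infinite for `s ≤ 1/2`, so such `s` never qualify (`half_lt_of_mem`).

The first two facts put `s = 1` in the defining set for every `B > 1`; with the third,
`1/2 ≤ t_B ≤ 1`.
As `B → 1⁺`, the lower bound for `Z_n(s)` makes the limit at least
`2 (1-s) log (3/2) - s² log B`, which is positive for `s` bounded away from `1`, so `t_B → 1`.
As `B → ∞`, for fixed `s > 1/2` the finite first sum `B^{-s²} ζ(2s)` drops below `1`, which by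
submultiplicativity bounds all the sums by `1`, so `t_B ≤ s` eventually.
-/

open Filter Topology MeasureTheory
open scoped ENNReal NNReal

/-- The Gauss map `T(x) = 1/x - ⌊1/x⌋` (with `T 0 = 0`). -/
noncomputable def gaussMap (x : ℝ) : ℝ := if x = 0 then 0 else 1 / x - ⌊1 / x⌋

/-- The `n`-th partial quotient `a_n(x) = ⌊1 / T^[n-1] x⌋` of the continued fraction
expansion of `x` (for `n ≥ 1`). -/
noncomputable def cfA (n : ℕ) (x : ℝ) : ℕ := ⌊1 / gaussMap^[n - 1] x⌋₊

/-- The continuant `q_n(a_1, …, a_n)`, defined by `q_{-1} = 0`, `q_0 = 1`,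
`q_k = a_k q_{k-1} + q_{k-2}`. -/
def contQ (l : List ℕ) : ℕ := (l.foldl (fun p a => (p.2, a * p.2 + p.1)) (0, 1)).2

/-- The continuant numerator `p_n(a_1, …, a_n)`, defined by `p_{-1} = 1`, `p_0 = 0`,
`p_k = a_k p_{k-1} + p_{k-2}`. -/
def contP (l : List ℕ) : ℕ := (l.foldl (fun p a => (p.2, a * p.2 + p.1)) (1, 0)).2

/-- `q_n(x) = q_n(a_1(x), …, a_n(x))`. -/
noncomputable def cfQ (x : ℝ) (n : ℕ) : ℕ := contQ (List.ofFn fun i : Fin n => cfA (i + 1) x)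

/-- `p_n(x) = p_n(a_1(x), …, a_n(x))`. -/
noncomputable def cfP (x : ℝ) (n : ℕ) : ℕ := contP (List.ofFn fun i : Fin n => cfA (i + 1) x)

/-- The sum `Σ_{(a_1,…,a_n) ∈ ℕ^n} B^{-n c} · q_n(a_1,…,a_n)^{-2 s}` over all `n`-tuples
of positive integers, computed in `ℝ≥0∞`. -/
noncomputable def presSum (B c s : ℝ) (n : ℕ) : ℝ≥0∞ :=
  ∑' a : Fin n → ℕ+,
    ENNReal.ofReal (B ^ (-(n : ℝ) * c) *
      (contQ (List.ofFn fun i => (a i : ℕ)) : ℝ) ^ (-2 * s))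

/-- `inf { s ≥ 0 : lim_{n→∞} (1/n) · log( Σ_{(a_1,…,a_n)∈ℕ^n} B^{-n·c(s)} q_n^{-2s} ) ≤ 0 }`,
where the limit is required to exist (in `EReal`) and be `≤ 0`. -/
noncomputable def presInf (B : ℝ) (c : ℝ → ℝ) : ℝ :=
  sInf {s : ℝ | 0 ≤ s ∧ ∃ P : EReal, P ≤ 0 ∧
    Tendsto (fun n : ℕ => (((n : ℝ)⁻¹ : ℝ) : EReal) * ENNReal.log (presSum B (c s) s n))
      atTop (nhds P)}

/-! ### Continuants -/

/-- The pair `(q_{k-1}, q_k)` reached from the initial pair `x` by applying the continuant recurrence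
along the digits of `l`; `contQ l` is the second entry for `x = (0, 1)`. -/
def contState (l : List ℕ) (x : ℕ × ℕ) : ℕ × ℕ :=
  l.foldl (fun p a => (p.2, a * p.2 + p.1)) x

/-- The digit string of a tuple of positive integers. -/
def word {n : ℕ} (a : Fin n → ℕ+) : List ℕ := List.ofFn fun i => (a i : ℕ)

lemma contState_cons (b : ℕ) (l : List ℕ) (x : ℕ × ℕ) :
    contState (b :: l) x = contState l (x.2, b * x.2 + x.1) := rfl

lemma contQ_eq (l : List ℕ) : contQ l = (contState l (0, 1)).2 := rfl

lemma contState_append (l₁ l₂ : List ℕ) (x : ℕ × ℕ) :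
    contState (l₁ ++ l₂) x = contState l₂ (contState l₁ x) := by
  simp [contState, List.foldl_append]

lemma contState_mono (l : List ℕ) : ∀ x y : ℕ × ℕ, x.1 ≤ y.1 → x.2 ≤ y.2 →
    (contState l x).2 ≤ (contState l y).2 := by
  induction l with
  | nil => intro x y _ h; exact h
  | cons b l ih =>
    intro x y h1 h2
    rw [contState_cons, contState_cons]
    exact ih _ _ h2 (by dsimp only; gcongr)

lemma contState_smul (l : List ℕ) (c : ℕ) : ∀ x : ℕ × ℕ,
    (contState l (c * x.1, c * x.2)).2 = c * (contState l x).2 := by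
  induction l with
  | nil => intro x; rfl
  | cons b l ih =>
    intro x
    rw [contState_cons, contState_cons, ← ih]
    congr 3
    dsimp only
    ring

lemma contQ_mul_le (l₁ l₂ : List ℕ) : contQ l₁ * contQ l₂ ≤ contQ (l₁ ++ l₂) := by
  rw [contQ_eq (l₁ ++ l₂), contState_append, contQ_eq l₂, ← contState_smul]
  exact contState_mono _ _ _ (by simp) (by simp [contQ_eq])

lemma contState_le (l : List ℕ) : ∀ x : ℕ × ℕ, 0 < x.2 → x.1 ≤ x.2 → (∀ b ∈ l, 0 < b) →
    0 < (contState l x).2 ∧ (contState l x).1 ≤ (contState l x).2 := by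
  induction l with
  | nil => intro x h h' _; exact ⟨h, h'⟩
  | cons b l ih =>
    intro x h h' hl
    rw [contState_cons]
    have hb : 0 < b := hl b (by simp)
    exact ih _ (by dsimp only; positivity) (by dsimp only; nlinarith)
      (fun c hc => hl c (by simp [hc]))

/-- `q + q'` grows by a factor `3/2` at each step, because `q' ≤ q`. -/
lemma contState_growth (l : List ℕ) : ∀ x : ℕ × ℕ, x.1 ≤ x.2 → (∀ b ∈ l, 0 < b) →
    (3 / 2 : ℝ) ^ l.length * ((x.2 : ℝ) + x.1) ≤ (contState l x).2 + (contState l x).1 := by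
  induction l with
  | nil => intro x _ _; simp [contState]
  | cons b l ih =>
    intro x h hl
    rw [contState_cons]
    have hb : 1 ≤ b := hl b (by simp)
    refine le_trans ?_ (ih _ (by dsimp only; nlinarith) (fun c hc => hl c (by simp [hc])))
    have hb' : (1 : ℝ) ≤ b := by exact_mod_cast hb
    have h' : (x.1 : ℝ) ≤ x.2 := by exact_mod_cast h
    have h0 : (0 : ℝ) ≤ x.2 := by positivity
    rw [List.length_cons, pow_succ, mul_assoc]
    push_cast
    gcongr
    nlinarith

lemma word_pos {n : ℕ} (a : Fin n → ℕ+) : ∀ b ∈ word a, 0 < b := by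
  intro b hb
  simp only [word, List.mem_ofFn] at hb
  obtain ⟨i, rfl⟩ := hb
  exact (a i).pos

lemma contQ_pos {n : ℕ} (a : Fin n → ℕ+) : 0 < contQ (word a) :=
  (contState_le _ (0, 1) (by simp) (by simp) (word_pos a)).1

lemma contQ_growth {n : ℕ} (a : Fin n → ℕ+) : (3 / 2 : ℝ) ^ n / 2 ≤ contQ (word a) := by
  have h := contState_growth (word a) (0, 1) (by simp) (word_pos a)
  have h2 := (contState_le _ (0, 1) (by simp) (by simp) (word_pos a)).2
  have h3 : ((contState (word a) (0, 1)).1 : ℝ) ≤ (contState (word a) (0, 1)).2 := by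
    exact_mod_cast h2
  rw [contQ_eq]
  simp only [word, List.length_ofFn] at h h3 ⊢
  norm_num at h
  linarith

/-! ### The cylinder identity -/

/-- `1 / (q (q + q'))` for `x = (q', q)`: the length of the corresponding continued fraction
cylinder when `x` is reached from `(0, 1)`. -/
noncomputable def cyl (x : ℕ × ℕ) : ℝ := 1 / ((x.2 : ℝ) * (x.2 + x.1))

lemma cyl_nonneg (x : ℕ × ℕ) : 0 ≤ cyl x := by unfold cyl; positivity

lemma tsum_cyl_step (x : ℕ × ℕ) (hx : 0 < x.2) :
    ∑' b : ℕ+, ENNReal.ofReal (cyl (x.2, b * x.2 + x.1)) = ENNReal.ofReal (cyl x) := by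
  have hq : (0 : ℝ) < x.2 := by exact_mod_cast hx
  have hp : (0 : ℝ) ≤ x.1 := by positivity
  rw [tsum_pnat_eq_tsum_succ (f := fun b : ℕ => ENNReal.ofReal (cyl (x.2, b * x.2 + x.1)))]
  have hs : HasSum (fun k : ℕ => cyl (x.2, (k + 1) * x.2 + x.1)) (cyl x) := by
    rw [hasSum_iff_tendsto_nat_of_nonneg (fun _ => cyl_nonneg _)]
    set f : ℕ → ℝ := fun k => 1 / ((x.2 : ℝ) * ((k + 1) * x.2 + x.1)) with hf
    have hterm : ∀ k : ℕ, cyl (x.2, (k + 1) * x.2 + x.1) = f k - f (k + 1) := by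
      intro k
      have h1 : (0 : ℝ) < (k + 1) * x.2 + x.1 := by positivity
      have h2 : (0 : ℝ) < (k + 1 + 1) * x.2 + x.1 := by positivity
      have h3 : (0 : ℝ) < (k + 1) * x.2 + x.1 + x.2 := by positivity
      simp only [cyl, hf]
      push_cast
      field_simp
      ring
    simp_rw [hterm, Finset.sum_range_sub']
    have hf0 : f 0 = cyl x := by simp [hf, cyl]
    have hlim : Tendsto f atTop (𝓝 0) := by
      have h1 : Tendsto (fun k : ℕ => ((k : ℝ) + 1) * x.2 + x.1) atTop atTop :=
        tendsto_atTop_add_const_right _ _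
          ((tendsto_atTop_add_const_right _ _ tendsto_natCast_atTop_atTop).atTop_mul_const hq)
      refine (h1.const_mul_atTop hq).inv_tendsto_atTop.congr fun k => ?_
      simp only [hf, Pi.inv_apply, one_div]
    simpa [hf0] using hlim.const_sub (f 0)
  rw [← hs.tsum_eq, ENNReal.ofReal_tsum_of_nonneg (fun _ => cyl_nonneg _) hs.summable]

lemma tsum_cyl (n : ℕ) : ∀ x : ℕ × ℕ, 0 < x.2 →
    ∑' a : Fin n → ℕ+, ENNReal.ofReal (cyl (contState (word a) x)) = ENNReal.ofReal (cyl x) := by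
  induction n with
  | zero => intro x _; simp [word, contState]
  | succ n ih =>
    intro x hx
    rw [← (Fin.consEquiv fun _ : Fin (n + 1) => ℕ+).tsum_eq, ← tsum_cyl_step x hx]
    rw [ENNReal.tsum_prod (f := fun (b : ℕ+) (a : Fin n → ℕ+) =>
      ENNReal.ofReal (cyl (contState
        (word ((Fin.consEquiv fun _ : Fin (n + 1) => ℕ+) (b, a))) x)))]
    refine tsum_congr fun b => ?_
    rw [← ih (x.2, b * x.2 + x.1) (by dsimp only; have := b.pos; positivity)]
    refine tsum_congr fun a => ?_
    simp [word, Fin.consEquiv, List.ofFn_succ, contState_cons]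

lemma tsum_cyl_one (n : ℕ) :
    ∑' a : Fin n → ℕ+, ENNReal.ofReal (cyl (contState (word a) (0, 1))) = 1 := by
  rw [tsum_cyl n (0, 1) (by simp)]
  simp [cyl]

/-! ### Bounds for the sums -/

lemma presSum_lower {B s : ℝ} (c : ℝ) (hB : 0 < B) (hs : s ≤ 1) (n : ℕ) :
    ENNReal.ofReal (Real.exp (n * (2 * (1 - s) * Real.log (3 / 2) - c * Real.log B)
      - 2 * (1 - s) * Real.log 2)) ≤ presSum B c s n := by
  rw [← mul_one (ENNReal.ofReal _), ← tsum_cyl_one n, ← ENNReal.tsum_mul_left]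
  unfold presSum
  refine ENNReal.tsum_le_tsum fun a => ?_
  rw [← ENNReal.ofReal_mul (Real.exp_nonneg _)]
  apply ENNReal.ofReal_le_ofReal
  change _ ≤ B ^ (-(n : ℝ) * c) * (contQ (word a) : ℝ) ^ (-2 * s)
  have hQ : (0 : ℝ) < contQ (word a) := by exact_mod_cast contQ_pos a
  have hg := contQ_growth a
  have hcyl : cyl (contState (word a) (0, 1)) ≤ (contQ (word a) : ℝ) ^ (-2 : ℝ) := by
    rw [Real.rpow_neg hQ.le, Real.rpow_two, cyl, one_div]
    rw [contQ_eq] at hQ ⊢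
    refine inv_anti₀ (by positivity) ?_
    rw [pow_two]
    gcongr
    simp
  have hexp : Real.exp (n * (2 * (1 - s) * Real.log (3 / 2) - c * Real.log B)
      - 2 * (1 - s) * Real.log 2)
      = B ^ (-(n : ℝ) * c) * ((3 / 2 : ℝ) ^ n / 2) ^ (2 * (1 - s)) := by
    rw [Real.rpow_def_of_pos hB, Real.rpow_def_of_pos (by positivity), ← Real.exp_add,
      Real.log_div (x := (3 / 2 : ℝ) ^ n) (by positivity) (by norm_num), Real.log_pow]
    congr 1
    ring
  have hsplit : (contQ (word a) : ℝ) ^ (-2 * s)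
      = (contQ (word a) : ℝ) ^ (2 * (1 - s)) * (contQ (word a) : ℝ) ^ (-2 : ℝ) := by
    rw [← Real.rpow_add hQ]
    congr 1
    ring
  rw [hexp, hsplit, mul_assoc]
  have h0 := cyl_nonneg (contState (word a) (0, 1))
  have h1 : 0 ≤ 2 * (1 - s) := by linarith
  gcongr

lemma presSum_one_le {B : ℝ} (hB : 1 < B) (n : ℕ) :
    presSum B (1 ^ 2) 1 n ≤ ENNReal.ofReal 2 := by
  rw [← mul_one (ENNReal.ofReal 2), ← tsum_cyl_one n, ← ENNReal.tsum_mul_left]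
  unfold presSum
  refine ENNReal.tsum_le_tsum fun a => ?_
  rw [← ENNReal.ofReal_mul (by norm_num)]
  apply ENNReal.ofReal_le_ofReal
  change B ^ (-(n : ℝ) * 1 ^ 2) * (contQ (word a) : ℝ) ^ (-2 * 1 : ℝ) ≤ _
  have hQ : (0 : ℝ) < contQ (word a) := by exact_mod_cast contQ_pos a
  have h2 : ((contState (word a) (0, 1)).1 : ℝ) ≤ (contState (word a) (0, 1)).2 := by
    exact_mod_cast (contState_le _ (0, 1) (by simp) (by simp) (word_pos a)).2
  have hB1 : B ^ (-(n : ℝ) * 1 ^ 2) ≤ 1 :=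
    Real.rpow_le_one_of_one_le_of_nonpos hB.le (by simp)
  have hc : (contQ (word a) : ℝ) ^ (-2 * 1 : ℝ) ≤ 2 * cyl (contState (word a) (0, 1)) := by
    rw [mul_one, Real.rpow_neg hQ.le, cyl]
    norm_num
    rw [contQ_eq] at hQ ⊢
    set q : ℝ := ((contState (word a) (0, 1)).2 : ℝ)
    set p : ℝ := ((contState (word a) (0, 1)).1 : ℝ)
    have hp : 0 ≤ p := by positivity
    rw [← mul_inv, ← div_eq_mul_inv, inv_eq_one_div, div_le_div_iff₀ (by positivity) (by positivity)]
    nlinarith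
  calc _ ≤ 1 * (2 * cyl (contState (word a) (0, 1))) := by gcongr
    _ = _ := one_mul _

lemma presSum_submul {B s : ℝ} (c : ℝ) (hB : 0 < B) (hs : 0 ≤ s) (m n : ℕ) :
    presSum B c s (m + n) ≤ presSum B c s m * presSum B c s n := by
  conv_lhs => unfold presSum
  rw [← (Fin.appendEquiv m n).tsum_eq]
  have hr : presSum B c s m * presSum B c s n
      = ∑' p : (Fin m → ℕ+) × (Fin n → ℕ+),
        ENNReal.ofReal (B ^ (-(m : ℝ) * c) * (contQ (word p.1) : ℝ) ^ (-2 * s)) *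
        ENNReal.ofReal (B ^ (-(n : ℝ) * c) * (contQ (word p.2) : ℝ) ^ (-2 * s)) := by
    rw [ENNReal.tsum_prod (f := fun (a : Fin m → ℕ+) (b : Fin n → ℕ+) =>
        ENNReal.ofReal (B ^ (-(m : ℝ) * c) * (contQ (word a) : ℝ) ^ (-2 * s)) *
        ENNReal.ofReal (B ^ (-(n : ℝ) * c) * (contQ (word b) : ℝ) ^ (-2 * s)))]
    simp_rw [ENNReal.tsum_mul_left, ENNReal.tsum_mul_right]
    rfl
  rw [hr]
  refine ENNReal.tsum_le_tsum fun p => ?_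
  rw [← ENNReal.ofReal_mul (by positivity)]
  apply ENNReal.ofReal_le_ofReal
  have hw : (List.ofFn fun i => ((Fin.appendEquiv m n p i : ℕ+) : ℕ)) = word p.1 ++ word p.2 := by
    rw [word, word, ← List.ofFn_fin_append]
    congr 1
    funext i
    refine Fin.addCases (fun j => ?_) (fun j => ?_) i <;> simp [Fin.appendEquiv]
  rw [hw]
  have h1 : (0 : ℝ) < contQ (word p.1) := by exact_mod_cast contQ_pos p.1
  have h2 : (0 : ℝ) < contQ (word p.2) := by exact_mod_cast contQ_pos p.2
  have h3 : (contQ (word p.1) : ℝ) * contQ (word p.2) ≤ contQ (word p.1 ++ word p.2) := by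
    exact_mod_cast contQ_mul_le _ _
  have h4 := Real.rpow_le_rpow_of_nonpos (mul_pos h1 h2) h3 (show -2 * s ≤ 0 by linarith)
  rw [Real.mul_rpow h1.le h2.le] at h4
  have h5 : B ^ (-((m + n : ℕ) : ℝ) * c) = B ^ (-(m : ℝ) * c) * B ^ (-(n : ℝ) * c) := by
    rw [← Real.rpow_add hB]
    congr 1
    push_cast
    ring
  rw [h5]
  calc _ ≤ B ^ (-(m : ℝ) * c) * B ^ (-(n : ℝ) * c) *
        ((contQ (word p.1) : ℝ) ^ (-2 * s) * (contQ (word p.2) : ℝ) ^ (-2 * s)) := by gcongr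
    _ = _ := by ring

lemma presSum_zero (B c s : ℝ) : presSum B c s 0 = 1 := by
  simp [presSum, contQ]

lemma presSum_le_pow {B s : ℝ} (c : ℝ) (hB : 0 < B) (hs : 0 ≤ s) (n : ℕ) :
    presSum B c s n ≤ presSum B c s 1 ^ n := by
  induction n with
  | zero => simp [presSum_zero]
  | succ n ih =>
    rw [pow_succ]
    exact (presSum_submul c hB hs n 1).trans (by gcongr)

lemma presSum_one_eq {B c s : ℝ} (hB : 0 < B) (hs : 1 / 2 < s) :
    presSum B c s 1 = ENNReal.ofReal (B ^ (-c) * ∑' b : ℕ+, (b : ℝ) ^ (-2 * s)) := by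
  have hsum : Summable fun b : ℕ+ => ((b : ℕ) : ℝ) ^ (-2 * s) := by
    rw [summable_pnat_iff_summable_nat (f := fun b : ℕ => (b : ℝ) ^ (-2 * s)),
      Real.summable_nat_rpow]
    linarith
  rw [← tsum_mul_left, ENNReal.ofReal_tsum_of_nonneg (fun b => by positivity)
    (hsum.mul_left _)]
  unfold presSum
  rw [← (Equiv.funUnique (Fin 1) ℕ+).symm.tsum_eq]
  refine tsum_congr fun b => ?_
  simp [contQ]

/-- At or below the exponent `1/2` the sum is infinite already along the tuples `(b, 1, …, 1)`, whose
continuant is at most a constant times `b`. -/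
lemma presSum_eq_top {B s : ℝ} (c : ℝ) (hB : 0 < B) (hs0 : 0 ≤ s) (hs : s ≤ 1 / 2) (n : ℕ) :
    presSum B c s (n + 1) = ⊤ := by
  set l : List ℕ := word (fun _ : Fin n => (1 : ℕ+)) with hl
  set K : ℕ := (contState l (1, 1)).2 with hK
  have hKpos : 0 < K := (contState_le l (1, 1) (by simp) (by simp) (word_pos _)).1
  have hKpos' : (0 : ℝ) < K := by exact_mod_cast hKpos
  set D : ℝ := B ^ (-((n + 1 : ℕ) : ℝ) * c) * (K : ℝ) ^ (-2 * s) with hD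
  have hDpos : 0 < D := by positivity
  have hinj : Function.Injective
      (fun b : ℕ+ => (Fin.cons b (fun _ => 1) : Fin (n + 1) → ℕ+)) := by
    intro b b' h
    simpa using congrFun h 0
  have h1 : ∑' b : ℕ+, ENNReal.ofReal (D * (b : ℝ) ^ (-2 * s)) ≤ presSum B c s (n + 1) := by
    unfold presSum
    refine le_trans ?_ (ENNReal.tsum_comp_le_tsum_of_injective hinj _)
    refine ENNReal.tsum_le_tsum fun b => ENNReal.ofReal_le_ofReal ?_
    have hw : (List.ofFn fun i => (((Fin.cons b (fun _ => 1) : Fin (n + 1) → ℕ+) i : ℕ+) : ℕ))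
        = (b : ℕ) :: l := by
      simp [hl, word, List.ofFn_succ]
    rw [hw]
    have hle : contQ ((b : ℕ) :: l) ≤ K * b := by
      rw [contQ_eq, contState_cons, mul_comm K, hK, ← contState_smul]
      exact contState_mono _ _ _ (by have := b.pos; simp; omega) (by simp)
    have hpos : 0 < contQ ((b : ℕ) :: l) := by
      rw [← hw]
      exact contQ_pos _
    have hle' : (contQ ((b : ℕ) :: l) : ℝ) ≤ K * (b : ℕ) := by exact_mod_cast hle
    have := Real.rpow_le_rpow_of_nonpos (by exact_mod_cast hpos) hle'
      (show -2 * s ≤ 0 by linarith)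
    rw [Real.mul_rpow hKpos'.le (by positivity)] at this
    rw [hD, mul_assoc]
    gcongr
  by_contra htop
  have h2 := ENNReal.summable_toReal (ne_top_of_le_ne_top htop h1)
  have h3 : Summable fun b : ℕ+ => ((b : ℕ) : ℝ) ^ (-2 * s) := by
    rw [← summable_mul_left_iff hDpos.ne']
    refine h2.congr fun b => ?_
    rw [ENNReal.toReal_ofReal (by positivity)]
  rw [summable_pnat_iff_summable_nat (f := fun b : ℕ => (b : ℝ) ^ (-2 * s)),
    Real.summable_nat_rpow] at h3
  linarith

/-! ### The set defining `t_B` -/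

/-- The set of exponents whose infimum is `t_B`. -/
def presSet (B : ℝ) : Set ℝ :=
  {s : ℝ | 0 ≤ s ∧ ∃ P : EReal, P ≤ 0 ∧
    Tendsto (fun n : ℕ => (((n : ℝ)⁻¹ : ℝ) : EReal) * ENNReal.log (presSum B (s ^ 2) s n))
      atTop (nhds P)}

lemma presInf_eq (B : ℝ) : presInf B (fun s => s ^ 2) = sInf (presSet B) := rfl

lemma half_lt_of_mem {B s : ℝ} (hB : 1 < B) (hs : s ∈ presSet B) : 1 / 2 < s := by
  obtain ⟨hs0, P, hP, hlim⟩ := hs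
  by_contra! hle
  have hev : ∀ᶠ n : ℕ in atTop,
      (((n : ℝ)⁻¹ : ℝ) : EReal) * ENNReal.log (presSum B (s ^ 2) s n) = ⊤ := by
    filter_upwards [eventually_ge_atTop 1] with n hn
    obtain ⟨m, rfl⟩ := Nat.exists_eq_add_of_le' hn
    rw [presSum_eq_top _ (by linarith) hs0 hle, ENNReal.log_top]
    apply EReal.mul_top_of_pos
    exact_mod_cast (by positivity : (0 : ℝ) < ((m + 1 : ℕ) : ℝ)⁻¹)
  have hPtop : P = ⊤ := tendsto_nhds_unique (hlim.congr' hev) tendsto_const_nhds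
  simp [hPtop] at hP

lemma rate_nonpos_of_mem {B s : ℝ} (hB : 1 < B) (hs1 : s ≤ 1) (hs : s ∈ presSet B) :
    2 * (1 - s) * Real.log (3 / 2) - s ^ 2 * Real.log B ≤ 0 := by
  obtain ⟨hs0, P, hP, hlim⟩ := hs
  set α := 2 * (1 - s) * Real.log (3 / 2) - s ^ 2 * Real.log B with hα
  set β := 2 * (1 - s) * Real.log 2 with hβ
  have hreal : Tendsto (fun n : ℕ => α - β * (n : ℝ)⁻¹) atTop (𝓝 α) := by
    simpa using (tendsto_inv_atTop_nhds_zero_nat (𝕜 := ℝ)).const_mul β |>.const_sub α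
  have hcoe : Tendsto (fun n : ℕ => ((α - β * (n : ℝ)⁻¹ : ℝ) : EReal)) atTop (𝓝 (α : EReal)) :=
    EReal.tendsto_coe.2 hreal
  have hle : (α : EReal) ≤ P := by
    refine le_of_tendsto_of_tendsto hcoe hlim ?_
    filter_upwards [eventually_ge_atTop 1] with n hn
    have hn' : (0 : ℝ) < n := by exact_mod_cast hn
    have h := ENNReal.log_monotone (presSum_lower (B := B) (s ^ 2) (by linarith) hs1 n)
    rw [ENNReal.log_ofReal_of_pos (Real.exp_pos _), Real.log_exp] at h
    have h' := mul_le_mul_of_nonneg_left h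
      (show (0 : EReal) ≤ (((n : ℝ)⁻¹ : ℝ) : EReal) by exact_mod_cast (inv_pos.2 hn').le)
    refine le_trans (le_of_eq ?_) h'
    rw [← EReal.coe_mul]
    congr 1
    rw [← hα, ← hβ]
    field_simp
  exact_mod_cast hle.trans hP

/-- Fekete's lemma: for `1/2 < s ≤ 1` the limit exists, and it is nonpositive as soon as the sums
stay bounded. -/
lemma mem_presSet_of_bound {B s C : ℝ} (hB : 1 < B) (hs : 1 / 2 < s) (hs1 : s ≤ 1)
    (hbound : ∀ n, presSum B (s ^ 2) s n ≤ ENNReal.ofReal C) : s ∈ presSet B := by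
  have hB0 : 0 < B := by linarith
  have hs0 : 0 ≤ s := by linarith
  set g : ℕ → ℝ≥0∞ := presSum B (s ^ 2) s with hg
  set α := 2 * (1 - s) * Real.log (3 / 2) - s ^ 2 * Real.log B with hα
  set β := 2 * (1 - s) * Real.log 2 with hβ
  have hβ0 : 0 ≤ β := mul_nonneg (by linarith) (Real.log_nonneg (by norm_num))
  have hlow : ∀ n : ℕ, ENNReal.ofReal (Real.exp (n * α - β)) ≤ g n :=
    presSum_lower (s ^ 2) hB0 hs1
  have htop : ∀ n, g n ≠ ⊤ := fun n => ne_top_of_le_ne_top ENNReal.ofReal_ne_top (hbound n)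
  have hne : ∀ n, g n ≠ 0 := fun n =>
    ((ENNReal.ofReal_pos.2 (Real.exp_pos _)).trans_le (hlow n)).ne'
  have hpos : ∀ n, 0 < (g n).toReal := fun n => ENNReal.toReal_pos (hne n) (htop n)
  set u : ℕ → ℝ := fun n => Real.log (g n).toReal with hu
  have hsub : Subadditive u := by
    intro m n
    rw [hu]
    dsimp only
    rw [← Real.log_mul (hpos m).ne' (hpos n).ne', ← ENNReal.toReal_mul]
    refine Real.log_le_log (hpos _) (ENNReal.toReal_mono (ENNReal.mul_ne_top (htop m) (htop n)) ?_)
    exact presSum_submul _ hB0 hs0 m n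
  have hulow : ∀ n : ℕ, n * α - β ≤ u n := by
    intro n
    rw [hu]
    dsimp only
    rw [Real.le_log_iff_exp_le (hpos n)]
    exact (ENNReal.ofReal_le_iff_le_toReal (htop n)).1 (hlow n)
  have hbdd : BddBelow (Set.range fun n : ℕ => u n / n) := by
    refine ⟨-(|α| + β), ?_⟩
    rintro _ ⟨n, rfl⟩
    dsimp only
    have hαabs := neg_abs_le α
    rcases Nat.eq_zero_or_pos n with rfl | hn
    · simp only [CharP.cast_eq_zero, div_zero]
      linarith [abs_nonneg α]
    · have hn' : (1 : ℝ) ≤ n := by exact_mod_cast hn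
      rw [le_div_iff₀ (by linarith)]
      nlinarith [hulow n]
  have hlim := hsub.tendsto_lim hbdd
  have hC : ∀ n, (g n).toReal ≤ max C 1 := fun n => by
    refine (ENNReal.toReal_mono ENNReal.ofReal_ne_top (hbound n)).trans ?_
    rw [ENNReal.toReal_ofReal']
    exact max_le_max le_rfl zero_le_one
  have hle : hsub.lim ≤ 0 := by
    have h0 : Tendsto (fun n : ℕ => Real.log (max C 1) / n) atTop (𝓝 0) :=
      tendsto_const_div_atTop_nhds_zero_nat _
    refine le_of_tendsto_of_tendsto' hlim h0 fun n => ?_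
    gcongr
    exact Real.log_le_log (hpos n) (hC n)
  refine ⟨hs0, (hsub.lim : EReal), by exact_mod_cast hle, ?_⟩
  refine (EReal.tendsto_coe.2 hlim).congr fun n => ?_
  change _ = (((n : ℝ)⁻¹ : ℝ) : EReal) * ENNReal.log (g n)
  rw [ENNReal.log_pos_real (hne n) (htop n), ← EReal.coe_mul, div_eq_inv_mul]

lemma one_mem_presSet {B : ℝ} (hB : 1 < B) : (1 : ℝ) ∈ presSet B :=
  mem_presSet_of_bound hB (by norm_num) le_rfl (presSum_one_le hB)

lemma presSet_bddBelow (B : ℝ) : BddBelow (presSet B) := ⟨0, fun _ h => h.1⟩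

/-- For fixed `s > 1/2` and `B` large, `B^{-s²} ζ(2s) ≤ 1`, which forces all sums to be `≤ 1`. -/
lemma eventually_mem_presSet {s : ℝ} (hs : 1 / 2 < s) (hs1 : s ≤ 1) :
    ∀ᶠ B : ℝ in atTop, s ∈ presSet B := by
  have hs2 : 0 < s ^ 2 := by positivity
  have hlim : Tendsto (fun B : ℝ => B ^ (-(s ^ 2)) * ∑' b : ℕ+, (b : ℝ) ^ (-2 * s)) atTop
      (𝓝 0) := by
    simpa using (tendsto_rpow_neg_atTop hs2).mul_const (∑' b : ℕ+, (b : ℝ) ^ (-2 * s))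
  filter_upwards [hlim.eventually_le_const one_pos, eventually_gt_atTop 1] with B h hB
  refine mem_presSet_of_bound (C := 1) hB hs hs1 fun n => ?_
  refine (presSum_le_pow _ (by linarith) (by linarith) n).trans ?_
  rw [presSum_one_eq (by linarith) hs, ENNReal.ofReal_one]
  exact pow_le_one' (by simpa using h) n

theorem tB_continuity :
    Tendsto (fun B : ℝ => presInf B (fun s => s ^ 2)) (nhdsWithin 1 (Set.Ioi 1)) (nhds 1) ∧
    Tendsto (fun B : ℝ => presInf B (fun s => s ^ 2)) atTop (nhds (1 / 2)) := by
  simp_rw [presInf_eq]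
  constructor
  · rw [tendsto_order]
    constructor
    · intro r hr
      obtain ⟨t, hrt, ht⟩ := exists_between hr
      have hlog : Tendsto Real.log (𝓝[>] 1) (𝓝 0) := by
        have := (Real.continuousAt_log one_ne_zero).tendsto
        rw [Real.log_one] at this
        exact this.mono_left nhdsWithin_le_nhds
      have hpos : 0 < 2 * (1 - t) * Real.log (3 / 2) :=
        mul_pos (by linarith) (Real.log_pos (by norm_num))
      filter_upwards [hlog.eventually_lt_const hpos, self_mem_nhdsWithin] with B hlt hB
      have hB : 1 < B := hB
      refine hrt.trans_le (le_csInf ⟨1, one_mem_presSet hB⟩ fun s hs => ?_)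
      by_contra! hst
      have h := rate_nonpos_of_mem hB (by linarith) hs
      have h1 : s ^ 2 * Real.log B ≤ Real.log B :=
        mul_le_of_le_one_left (Real.log_pos hB).le (by nlinarith [hs.1])
      have h2 : 2 * (1 - t) * Real.log (3 / 2) ≤ 2 * (1 - s) * Real.log (3 / 2) :=
        mul_le_mul_of_nonneg_right (by linarith) (Real.log_pos (by norm_num)).le
      linarith
    · intro r hr
      filter_upwards [self_mem_nhdsWithin] with B hB
      exact (csInf_le (presSet_bddBelow B) (one_mem_presSet hB)).trans_lt hr
  · rw [tendsto_order]
    constructor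
    · intro r hr
      filter_upwards [eventually_gt_atTop 1] with B hB
      exact hr.trans_le (le_csInf ⟨1, one_mem_presSet hB⟩ fun s hs => (half_lt_of_mem hB hs).le)
    · intro r hr
      obtain ⟨s, hs, hsr⟩ := exists_between (lt_min hr (show (1 / 2 : ℝ) < 1 by norm_num))
      filter_upwards [eventually_mem_presSet hs (hsr.trans_le (min_le_right _ _)).le] with B hB
      exact (csInf_le (presSet_bddBelow B) hB).trans_lt (hsr.trans_le (min_le_left _ _))
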